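/- Let d ≥ 2 and let H = F_2[T, X_2, …, X_d]/(X_i² − T·X_i : 2 ≤ i ≤ d), with H_1 the F_2-span of the images t, α_2, …, α_d of the variables. Then H is universally Koszul: for every ideal I of H generated by a subset of H_1 and every x ∈ H_1 with x ∉ I, the colon ideal I : x = { h ∈ H : h·x ∈ I } is again generated by a subset of H_1. -/

import Mathlib

open MvPolynomial

/-- The colon ideal `I : x = {a | a * x ∈ I}`. -/
def colonIdeal {A : Type*} [Ring A] (I : Ideal A) (x : A) : Ideal A :=
  Submodule.comap (LinearMap.toSpanSingleton A A x) I

/-- The defining relations `X_i² − T·X_i` (with `T = X 0`) of the cohomology of a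
superpythagorean field. -/
noncomputable def spRel (d : ℕ) [NeZero d] : Ideal (MvPolynomial (Fin d) (ZMod 2)) :=
  Ideal.span {p | ∃ i : Fin d, i ≠ 0 ∧ p = X i ^ 2 - X 0 * X i}

/-- The algebra `H = F₂[T, X₂, …, X_d]/(X_i² − T·X_i)`. -/
abbrev SPH (d : ℕ) [NeZero d] := MvPolynomial (Fin d) (ZMod 2) ⧸ spRel d

/-- The images `t = gen d 0`, `α_i = gen d i` of the variables in `H`. -/
noncomputable def gen (d : ℕ) [NeZero d] (i : Fin d) : SPH d :=
  Ideal.Quotient.mk (spRel d) (X i)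

/-- The degree-one component `H_1`, the `F₂`-span of `{t, α₂, …, α_d}`. -/
noncomputable def H1 (d : ℕ) [NeZero d] : Submodule (ZMod 2) (SPH d) :=
  Submodule.span (ZMod 2) (Set.range (gen d))


theorem sp_two (d : ℕ) [NeZero d] : (2 : SPH d) = 0 := by
  have h : algebraMap (ZMod 2) (SPH d) 2 = algebraMap (ZMod 2) (SPH d) 0 := congrArg _ (by decide)
  rwa [map_ofNat, map_zero] at h

theorem gen_sq (d : ℕ) [NeZero d] (i : Fin d) : gen d i * gen d i = gen d 0 * gen d i := by
  by_cases hi : i = 0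
  · rw [hi]
  · have h : Ideal.Quotient.mk (spRel d) (X i ^ 2 - X 0 * X i) = 0 :=
      Ideal.Quotient.eq_zero_iff_mem.2 (Ideal.subset_span ⟨i, hi, rfl⟩)
    rw [map_sub, map_pow, map_mul, sub_eq_zero, pow_two] at h
    exact h

theorem sp_lift (d : ℕ) [NeZero d] {R : Type*} [CommRing R] [Algebra (ZMod 2) R] (a : Fin d → R)
    (ha : ∀ i, i ≠ 0 → a i ^ 2 = a 0 * a i) :
    ∃ f : SPH d →ₐ[ZMod 2] R, ∀ i, f (gen d i) = a i := by
  have hk : ∀ p ∈ spRel d, (MvPolynomial.aeval a : MvPolynomial (Fin d) (ZMod 2) →ₐ[ZMod 2] R) p = 0 := by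
    intro p hp
    have : spRel d ≤ RingHom.ker
        (MvPolynomial.aeval a : MvPolynomial (Fin d) (ZMod 2) →ₐ[ZMod 2] R) := by
      refine Ideal.span_le.2 ?_
      rintro _ ⟨i, hi, rfl⟩
      simp [RingHom.mem_ker, ha i hi]
    exact this hp
  refine ⟨Ideal.Quotient.liftₐ (spRel d) (MvPolynomial.aeval a) hk, fun i => ?_⟩
  have : Ideal.Quotient.liftₐ (spRel d) (MvPolynomial.aeval a) hk
      (Ideal.Quotient.mk (spRel d) (X i)) = MvPolynomial.aeval a (X i) := rfl
  rw [gen, this, aeval_X]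

theorem sp_algHom_ext (d : ℕ) [NeZero d] {R : Type*} [CommRing R] [Algebra (ZMod 2) R]
    (f g : SPH d →ₐ[ZMod 2] R) (h : ∀ i, f (gen d i) = g (gen d i)) : f = g := by
  apply Ideal.Quotient.algHom_ext
  apply MvPolynomial.algHom_ext
  exact h

/-- evaluation of a quadratic algebra with `ω² = τ ω`. -/
noncomputable def qEval {R A : Type*} [CommRing R] [Algebra (ZMod 2) R] [CommRing A]
    [Algebra (ZMod 2) A] (g : R →ₐ[ZMod 2] A) (τ : R) (x : A) (hx : x * x = g τ * x) :
    QuadraticAlgebra R 0 τ →ₐ[ZMod 2] A where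
  toFun z := g z.re + g z.im * x
  map_one' := by
    change g 1 + g 0 * x = 1
    simp
  map_zero' := by simp
  map_add' z w := by simp; ring
  map_mul' z w := by
    simp only [QuadraticAlgebra.re_mul, QuadraticAlgebra.im_mul, map_add, map_mul, map_zero]
    linear_combination (-(g z.im * g w.im)) * hx
  commutes' r := by
    change g (algebraMap (ZMod 2) R r) + g 0 * x = _
    simp

theorem sp_tower (d : ℕ) [NeZero d] (S : Finset (Fin d)) :
    ∃ (R : Type) (_ : CommRing R) (_ : Algebra (ZMod 2) R) (a : Fin d → R)
      (g : R →ₐ[ZMod 2] SPH d), (∀ r, a 0 * r = 0 → r = 0) ∧ g (a 0) = gen d 0 ∧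
      ∀ i ∈ S, i ≠ 0 → a i ^ 2 = a 0 * a i ∧ g (a i) = gen d i := by
  classical
  induction S using Finset.induction_on with
  | empty =>
    refine ⟨Polynomial (ZMod 2), inferInstance, inferInstance, fun _ => Polynomial.X,
      Polynomial.aeval (gen d 0), ?_, ?_, ?_⟩
    · intro r hr
      exact (mul_eq_zero.1 hr).resolve_left Polynomial.X_ne_zero
    · simp
    · simp
  | insert j S hj ih =>
    obtain ⟨R, _, _, a, g, h1, h2, h3⟩ := ih
    by_cases hj0 : j = 0
    · refine ⟨R, _, _, a, g, h1, h2, ?_⟩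
      intro i hi hi0
      rcases Finset.mem_insert.1 hi with h | h
      · exact absurd (h.trans hj0) hi0
      · exact h3 i h hi0
    · have hx : gen d j * gen d j = g (a 0) * gen d j := by rw [h2, gen_sq]
      refine ⟨QuadraticAlgebra R 0 (a 0), inferInstance, inferInstance,
        fun i => if i = j then ⟨0, 1⟩ else ⟨a i, 0⟩, qEval g (a 0) (gen d j) hx, ?_, ?_, ?_⟩
      · intro r hr
        simp only [if_neg (Ne.symm hj0)] at hr
        have e1 := congrArg QuadraticAlgebra.re hr
        have e2 := congrArg QuadraticAlgebra.im hr
        simp at e1 e2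
        ext
        · exact h1 _ e1
        · exact h1 _ e2
      · simp only [if_neg (Ne.symm hj0)]
        change g (a 0) + g 0 * _ = _
        simp [h2]
      · intro i hi hi0
        simp only [if_neg (Ne.symm hj0)]
        by_cases hij : i = j
        · subst hij
          simp only [if_true]
          constructor
          · ext <;> simp [pow_two]
          · change g 0 + g 1 * _ = _
            simp
        · simp only [if_neg hij]
          have := h3 i ((Finset.mem_insert.1 hi).resolve_left hij) hi0
          constructor
          · ext <;> simp [pow_two]
            rw [← pow_two, this.1]
          · change g (a i) + g 0 * _ = _
            simp [this.2]

/-- `t` is a non-zero-divisor. -/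
theorem t_regular (d : ℕ) [NeZero d] (h : SPH d) (hh : h * gen d 0 = 0) : h = 0 := by
  obtain ⟨R, _, _, a, g, h1, h2, h3⟩ := sp_tower d Finset.univ
  obtain ⟨f, hf⟩ := sp_lift d a (fun i hi => (h3 i (Finset.mem_univ _) hi).1)
  have hgf : g.comp f = AlgHom.id (ZMod 2) (SPH d) := by
    apply sp_algHom_ext
    intro i
    by_cases hi : i = 0
    · subst hi
      simp [hf, h2]
    · simp [hf, (h3 i (Finset.mem_univ _) hi).2]
  have e : f h = 0 := by
    apply h1
    rw [← hf, ← map_mul, mul_comm, hh, map_zero]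
  have e2 := congrArg (fun k => k h) hgf
  simp only [AlgHom.comp_apply, AlgHom.id_apply, e, map_zero] at e2
  exact e2.symm

/-- The difference operator attached to a linear functional killing `t`. -/
theorem exists_D (d : ℕ) [NeZero d] (φ : SPH d →ₗ[ZMod 2] ZMod 2) (h0 : φ (gen d 0) = 0) :
    ∃ D : SPH d → SPH d, (∀ f g, D (f + g) = D f + D g) ∧
      (∀ f g, D (f * g) = D f * g + f * D g + gen d 0 * D f * D g) ∧
      ∀ y ∈ H1 d, D y = algebraMap (ZMod 2) (SPH d) (φ y) := by
  have h2 := sp_two d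
  have hc : ∀ c : ZMod 2, algebraMap (ZMod 2) (SPH d) c * algebraMap (ZMod 2) (SPH d) c
      = algebraMap (ZMod 2) (SPH d) c := by
    intro c
    rw [← map_mul]
    congr 1
    revert c
    decide
  obtain ⟨F, hF⟩ := sp_lift d (R := QuadraticAlgebra (SPH d) 0 (gen d 0))
    (fun i => ⟨gen d i, algebraMap (ZMod 2) (SPH d) (φ (gen d i))⟩) (by
      intro i hi
      have := hc (φ (gen d i))
      rw [pow_two]
      ext
      · simp [gen_sq]
      · simp only [QuadraticAlgebra.im_mul, h0, map_zero]
        linear_combination gen d 0 * this +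
          (gen d i * algebraMap (ZMod 2) (SPH d) (φ (gen d i))) * h2)
  have hre : ∀ f, (F f).re = f := by
    let P : QuadraticAlgebra (SPH d) 0 (gen d 0) →ₐ[ZMod 2] SPH d :=
      qEval (AlgHom.id _ _) (gen d 0) 0 (by simp)
    have hP : P.comp F = AlgHom.id _ _ := by
      apply sp_algHom_ext
      intro i
      change P (F (gen d i)) = gen d i
      rw [hF]
      change gen d i + _ * 0 = _
      simp
    intro f
    have e : (F f).re + (F f).im * 0 = f := congrArg (fun k => k f) hP
    simpa using e
  refine ⟨fun f => (F f).im, fun f g => by simp, fun f g => ?_, fun y hy => ?_⟩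
  · simp only [map_mul, QuadraticAlgebra.im_mul, hre]
    ring
  · refine Submodule.span_induction ?_ ?_ ?_ ?_ hy
    · rintro _ ⟨i, rfl⟩
      simp [hF]
    · simp
    · intro x y _ _ hx hy
      simp [hx, hy]
    · intro c x _ hx
      simp only at hx ⊢
      rw [map_smul F, QuadraticAlgebra.im_smul, hx, map_smul φ, smul_eq_mul, map_mul]
      exact Algebra.smul_def (A := SPH d) c (algebraMap (ZMod 2) (SPH d) (φ x))

theorem span_sub (d : ℕ) [NeZero d] (S : Set (SPH d)) {x : SPH d}
    (hx : x ∈ Submodule.span (ZMod 2) S) : x ∈ Ideal.span S :=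
  Submodule.span_subset_span (ZMod 2) (SPH d) S hx

theorem mem_of_D (d : ℕ) [NeZero d] (S : Set (SPH d)) (hS : S ⊆ (H1 d : Set (SPH d)))
    (x : SPH d) (hx : x ∈ H1 d) (hxS : x ∉ Submodule.span (ZMod 2) (insert (gen d 0) S))
    (h : SPH d) (hh : h * x ∈ Ideal.span S) :
    ∃ c : SPH d, h - c * (x + gen d 0) ∈ Ideal.span S := by
  obtain ⟨φ, hφx, hφ⟩ := Submodule.exists_le_ker_of_notMem hxS
  have h1 : φ x = 1 := by
    revert hφx
    generalize φ x = c
    revert c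
    decide
  have hk : ∀ y ∈ insert (gen d 0) S, φ y = 0 := fun y hy => hφ (Submodule.subset_span hy)
  obtain ⟨D, hadd, hmul, hD⟩ := exists_D d φ (hk _ (Set.mem_insert _ _))
  have hDI : ∀ y ∈ Ideal.span S, D y ∈ Ideal.span S := by
    intro y hy
    have h00 : D 0 = 0 := by simpa using hadd 0 0
    refine Submodule.span_induction (p := fun y _ => D y ∈ Ideal.span S) ?_ ?_ ?_ ?_ hy
    · intro s hs
      rw [hD s (hS hs), hk s (Set.mem_insert_of_mem _ hs), map_zero]
      exact zero_mem _
    · rw [h00]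
      exact zero_mem _
    · intro a b _ _ ha hb
      rw [hadd]
      exact add_mem ha hb
    · intro a b hb' hb
      rw [smul_eq_mul, hmul]
      exact add_mem (add_mem (Ideal.mul_mem_left _ _ hb') (Ideal.mul_mem_left _ _ hb))
        (Ideal.mul_mem_left _ _ hb)
  have e := hDI _ hh
  rw [hmul, hD x hx, h1, map_one] at e
  refine ⟨D h, ?_⟩
  convert e using 1
  linear_combination (-(D h * (x + gen d 0))) * sp_two d

theorem H1_sq (d : ℕ) [NeZero d] (x : SPH d) (hx : x ∈ H1 d) : x * (x + gen d 0) = 0 := by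
  have h2 := sp_two d
  refine Submodule.span_induction (p := fun x _ => x * (x + gen d 0) = 0) ?_ ?_ ?_ ?_ hx
  · rintro _ ⟨i, rfl⟩
    linear_combination gen_sq d i + gen d 0 * gen d i * h2
  · simp
  · intro x y _ _ hx hy
    linear_combination hx + hy + x * y * h2
  · intro c x _ hx
    have : c = 0 ∨ c = 1 := (by decide : ∀ c : ZMod 2, c = 0 ∨ c = 1) c
    rcases this with rfl | rfl
    · simp
    · simpa using hx

theorem mem_span_insert_two (d : ℕ) [NeZero d] (S : Set (SPH d)) (t x : SPH d)
    (hx : x ∈ Submodule.span (ZMod 2) (insert t S)) :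
    x ∈ Submodule.span (ZMod 2) S ∨ x + t ∈ Submodule.span (ZMod 2) S := by
  obtain ⟨c, z, hz, rfl⟩ := Submodule.mem_span_insert.1 hx
  have : c = 0 ∨ c = 1 := (by decide : ∀ c : ZMod 2, c = 0 ∨ c = 1) c
  rcases this with rfl | rfl
  · left; simpa using hz
  · right
    convert hz using 1
    rw [one_smul]
    linear_combination t * sp_two d

theorem t_regular_mod (d : ℕ) [NeZero d] (S : Finset (SPH d)) :
    (S : Set (SPH d)) ⊆ (H1 d : Set (SPH d)) →
    gen d 0 ∉ Submodule.span (ZMod 2) (S : Set (SPH d)) →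
    ∀ h, h * gen d 0 ∈ Ideal.span (S : Set (SPH d)) → h ∈ Ideal.span (S : Set (SPH d)) := by
  classical
  have h2 := sp_two d
  have ht : gen d 0 ∈ H1 d := Submodule.subset_span ⟨0, rfl⟩
  induction S using Finset.induction_on with
  | empty =>
    intro _ _ h hh
    simp only [Finset.coe_empty, Ideal.span_empty, Ideal.mem_bot] at hh ⊢
    exact t_regular d h hh
  | insert l S hl ih =>
    intro hS ht' h hh
    rw [Finset.coe_insert] at *
    have hS' : (S : Set (SPH d)) ⊆ (H1 d : Set (SPH d)) := (Set.subset_insert _ _).trans hS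
    have hlH : l ∈ H1 d := hS (Set.mem_insert _ _)
    have hle := Submodule.span_mono (R := ZMod 2) (Set.subset_insert l (S : Set (SPH d)))
    have hleI : Ideal.span (S : Set (SPH d)) ≤ Ideal.span (insert l (S : Set (SPH d))) :=
      Ideal.span_mono (Set.subset_insert _ _)
    have hll : l ∈ Submodule.span (ZMod 2) (insert l (S : Set (SPH d))) :=
      Submodule.subset_span (Set.mem_insert _ _)
    have ih' := ih hS' (fun hc => ht' (hle hc))
    obtain ⟨c, hc⟩ := (Ideal.mem_span_insert' _ _ _).1 hh
    by_cases hlS : l ∈ Submodule.span (ZMod 2) (S : Set (SPH d))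
    · apply hleI
      apply ih'
      have := sub_mem hc (Ideal.mul_mem_left _ c (span_sub d _ hlS))
      simpa using this
    · have hn : l + gen d 0 ∉ Submodule.span (ZMod 2) (insert (gen d 0) (S : Set (SPH d))) := by
        intro hm
        rcases mem_span_insert_two d _ _ _ hm with hm | hm
        · apply ht'
          simpa using sub_mem (hle hm) hll
        · apply hlS
          convert hm using 1
          linear_combination (-gen d 0) * h2
      have e1 : h * (l + gen d 0) * gen d 0 ∈ Ideal.span (S : Set (SPH d)) := by
        convert Ideal.mul_mem_left _ (l + gen d 0) hc using 1
        linear_combination (-c) * H1_sq d l hlH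
      obtain ⟨b, hb⟩ := mem_of_D d _ hS' _ (add_mem hlH ht) hn h (ih' _ e1)
      have hb' := hleI hb
      have := add_mem hb' (Ideal.mul_mem_left _ b
        (Ideal.subset_span (Set.mem_insert l (S : Set (SPH d)))))
      convert this using 1
      linear_combination (b * gen d 0) * h2

/-- For `d ≥ 2`, the algebra `H = F₂[T, X₂, …, X_d]/(X_i² − T·X_i)`
is universally Koszul: for every ideal `I` generated by a subset of `H_1` and every
`x ∈ H_1 \ I`, the colon ideal `I : x` is again generated by a subset of `H_1`. -/
theorem stmt12 (d : ℕ) [NeZero d] (hd : 2 ≤ d) :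
    ∀ I : Ideal (SPH d), (∃ S ⊆ ((H1 d : Submodule (ZMod 2) (SPH d)) : Set (SPH d)),
        I = Ideal.span S) →
      ∀ x ∈ H1 d, x ∉ I →
        ∃ S' ⊆ ((H1 d : Submodule (ZMod 2) (SPH d)) : Set (SPH d)),
          colonIdeal I x = Ideal.span S' := by
  classical
  rintro I ⟨S, hS, rfl⟩ x hx hxI
  have h2 := sp_two d
  have ht : gen d 0 ∈ H1 d := Submodule.subset_span ⟨0, rfl⟩
  have hmem : ∀ h, h ∈ colonIdeal (Ideal.span S) x ↔ h * x ∈ Ideal.span S := by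
    intro h
    simp [colonIdeal]
  refine ⟨insert (x + gen d 0) S, Set.insert_subset (add_mem hx ht) hS, ?_⟩
  apply le_antisymm
  · intro h hh
    rw [hmem] at hh
    rw [Ideal.mem_span_insert']
    by_cases hxS : x ∈ Submodule.span (ZMod 2) (insert (gen d 0) S)
    · have hxt := (mem_span_insert_two d _ _ _ hxS).resolve_left
        (fun hc => hxI (span_sub d _ hc))
      have hfin : S.Finite := by
        have : Module.Finite (ZMod 2) (H1 d) :=
          Module.Finite.span_of_finite (ZMod 2) (Set.finite_range (gen d))
        have : Finite (H1 d) := Module.finite_of_finite (ZMod 2)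
        exact (Set.toFinite (H1 d : Set (SPH d))).subset hS
      have key := t_regular_mod d hfin.toFinset
      rw [hfin.coe_toFinset] at key
      refine ⟨0, ?_⟩
      rw [zero_mul, add_zero]
      apply key hS
      · intro hc
        apply hxI
        apply span_sub
        simpa using sub_mem hxt hc
      · have := sub_mem (Ideal.mul_mem_left _ h (span_sub d _ hxt)) hh
        convert this using 1
        ring
    · obtain ⟨c, hc⟩ := mem_of_D d S hS x hx hxS h hh
      refine ⟨-c, ?_⟩
      convert hc using 1
      ring
  · rw [Ideal.span_le]
    rintro y (rfl | hy)
    · rw [SetLike.mem_coe, hmem, mul_comm, H1_sq d x hx]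
      exact zero_mem _
    · rw [SetLike.mem_coe, hmem]
      exact Ideal.mul_mem_right _ _ (Ideal.subset_span hy)
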